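/- arXiv:2205.14662 — 3 statements merged into one kernel-verified Lean document; each statement's English description precedes it below -/
import Mathlib

section
/- Let n ≥ 1, 0 < η < 1, B ≥ 1, and let (W(t))_{t≥0} be a sequence of n × n doubly stochastic matrices such that: every entry [W(t)]_{ij} is either 0 or at least η; every diagonal entry satisfies [W(t)]_{ii} ≥ η; and for every k ≥ 0 the directed graph on vertices {1,…,n} with edge set {(j,i) : [W(t)]_{ij} > 0 for some t with k ≤ t ≤ k+B−1} is strongly connected. Define the transition matrices Φ(t,s) = W(t)W(t−1)⋯W(s) for t ≥ s ≥ 0. Then for all t ≥ s ≥ 0 and all i, j, |[Φ(t,s)]_{ij} − 1/n| ≤ Γ θ^{t−s}, where Γ = (1 − η/(4n²))^{−2} and θ = (1 − η/(4n²))^{1/B}. -/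
open Finset

/-!
Multiplication by a doubly stochastic `A` decreases the squared norm of `x` by
`½ ∑ k i j, A k i * A k j * (x i - x j) ^ 2`. If the values of `x` are sorted as
`g 0 ≤ g 1 ≤ ⋯`, then `(x i - x j) ^ 2` dominates the sum of the squared gaps
`(g (d + 1) - g d) ^ 2` over the cuts `S d = {i | x i ≤ g d}` separating `i` from `j`, so the
decrease at `x` dominates the sum of the decreases at the indicators of the `S d`, weighted by
these squared gaps. The decrease at the indicator of a cut is at least `η / 2` as soon as a nonzero
entry of `A` crosses the cut.

Over a window of jointly connected matrices each cut is charged to the first step that crosses it: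
until then both sides evolve separately and the gap stays open. Thus the window costs `x` at least
`η / 2` times its sum of squared gaps, which for a mean-zero vector is at least `η / (2 n ^ 2)`
times its squared norm by Cauchy–Schwarz. The theorem is this contraction iterated on the vectors
`e_j - 1 / n`.
-/

section Gaps

variable {R : Type*} [LinearOrder R] {a b c : R} {g : ℕ → R}

lemma sum_gap_le [AddCommGroup R] [IsOrderedAddMonoid R] (hg : Monotone g) (F : Finset ℕ)
    (hab : a ≤ b) (ha : ∀ d ∈ F, a ≤ g d) (hb : ∀ d ∈ F, g (d + 1) ≤ b) :
    ∑ d ∈ F, (g (d + 1) - g d) ≤ b - a := by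
  induction F using Finset.induction_on_max generalizing b with
  | empty => simpa using hab
  | insert m F hm ih =>
    rw [sum_insert fun h => (hm m h).false]
    have below := ih (ha m (mem_insert_self m F)) (fun d hd => ha d (mem_insert_of_mem hd))
      fun d hd => hg (hm d hd)
    exact (add_le_add (sub_le_sub_right (hb m (mem_insert_self m F)) _) below).trans_eq
      (sub_add_sub_cancel _ _ _)

lemma sum_sq_gap_le [CommRing R] [IsStrictOrderedRing R] (hg : Monotone g) (F : Finset ℕ)
    (hab : a ≤ b) (ha : ∀ d ∈ F, a ≤ g d) (hb : ∀ d ∈ F, g (d + 1) ≤ b) :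
    ∑ d ∈ F, (g (d + 1) - g d) ^ 2 ≤ (b - a) ^ 2 := by
  have gap_nonneg (d : ℕ) : 0 ≤ g (d + 1) - g d := sub_nonneg.2 (hg d.le_succ)
  exact (sum_sq_le_sq_sum_of_nonneg fun d _ => gap_nonneg d).trans
    (pow_le_pow_left₀ (sum_nonneg fun d _ => gap_nonneg d) (sum_gap_le hg F hab ha hb) 2)

lemma le_two_mul_mul_of_add_eq_one [CommRing R] [IsStrictOrderedRing R]
    (hab : a + b = 1) (ha : 0 ≤ a) (hb : 0 ≤ b) (hca : c ≤ a) (hcb : c ≤ b) : c ≤ 2 * (a * b) := by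
  rcases le_total a b with _ | _ <;> nlinarith

lemma exists_monotone_range_eq {ι : Type*} [Fintype ι] [Nonempty ι] (x : ι → R) :
    ∃ g : ℕ → R, Monotone g ∧ Set.range g = Set.range x ∧ ∀ i, x i ≤ g (Fintype.card ι) := by
  let V := univ.image x
  have hV : 0 < #V := (univ_nonempty.image x).card_pos
  let e := V.orderEmbOfFin rfl
  have he : Set.range e = Set.range x := by simp [e, V]
  refine ⟨fun d => e ⟨min d (#V - 1), by omega⟩, fun c d hcd => ?_, ?_, fun i => ?_⟩
  · exact e.monotone (Fin.mk_le_mk.2 (min_le_min_right _ hcd))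
  · rw [← he]
    refine subset_antisymm (Set.range_subset_iff.2 fun d => Set.mem_range_self _)
      (Set.range_subset_iff.2 fun k => ⟨k, congrArg e (Fin.ext ?_)⟩)
    exact min_eq_left (by omega)
  · obtain ⟨k, hk⟩ : x i ∈ Set.range e := he ▸ Set.mem_range_self i
    have hcard : #V ≤ Fintype.card ι := card_image_le
    rw [← hk]
    exact e.monotone (Fin.mk_le_mk.2 (by omega))

lemma sum_sq_le_card_mul_of_sum_eq_zero {ι : Type*} [Fintype ι] [CommRing R]
    [IsStrictOrderedRing R] {x : ι → R} (hx : ∑ i, x i = 0)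
    (ha : ∀ i, a ≤ x i) (hb : ∀ i, x i ≤ b) :
    ∑ i, x i ^ 2 ≤ Fintype.card ι * (b - a) ^ 2 := by
  rcases isEmpty_or_nonempty ι
  · simp
  obtain ⟨i, -, hi⟩ := exists_le_of_sum_le (f := x) (g := 0) univ_nonempty (by simp [hx])
  obtain ⟨j, -, hj⟩ := exists_le_of_sum_le (f := 0) (g := x) univ_nonempty (by simp [hx])
  have ha0 : a ≤ 0 := (ha i).trans hi
  have hb0 : 0 ≤ b := hj.trans (hb j)
  calc ∑ i, x i ^ 2 ≤ ∑ _i : ι, (b - a) ^ 2 :=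
        sum_le_sum fun k _ => sq_le_sq' (by linarith [ha k]) (by linarith [hb k])
    _ = Fintype.card ι * (b - a) ^ 2 := by simp

end Gaps

section Cuts

variable {ι R : Type*}

/-- In the graph of the nonzero entries of `A`, some edge, of either direction, joins `S` to its
complement. -/
def Crosses [Zero R] (A : Matrix ι ι R) (S : Set ι) : Prop :=
  ∃ i j, A i j ≠ 0 ∧ ¬(i ∈ S ↔ j ∈ S)

/-- Every nontrivial cut of the index set is crossed by one of `W 0, …, W (B - 1)`, that is, the
union of their graphs is (weakly) connected. -/
def JointlyConnected [Zero R] (W : ℕ → Matrix ι ι R) (B : ℕ) : Prop :=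
  ∀ S : Set ι, S.Nonempty → Sᶜ.Nonempty → ∃ t < B, Crosses (W t) S

lemma jointlyConnected_of_transGen [Zero R] [Preorder R] {W : ℕ → Matrix ι ι R} {k B : ℕ}
    (hB : 1 ≤ B) (hconn : ∀ a b : ι, a ≠ b →
      Relation.TransGen (fun p q => ∃ t, k ≤ t ∧ t ≤ k + B - 1 ∧ 0 < W t q p) a b) :
    JointlyConnected (fun t => W (k + t)) B := by
  rintro S ⟨a, ha⟩ ⟨b, hb⟩
  by_contra! hS
  refine (Relation.TransGen.closed' (P := (· ∈ Sᶜ)) ?_ (hconn a b ?_) hb) ha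
  · rintro p q ⟨t, hkt, htk, hpos⟩ hq hp
    refine hS (t - k) (by omega) ⟨q, p, ?_, fun h => hq (h.2 hp)⟩
    simpa only [Nat.add_sub_cancel' hkt] using hpos.ne'
  · rintro rfl
    exact hb ha

/-- The cut `S` separates the values of `x`: they are at most `a` on `S` and at least `b` off `S`.
This persists under averaging until a step crosses the cut. -/
def IsSeparatedBy [LE R] (S : Set ι) (a b : R) (x : ι → R) : Prop :=
  (∀ i ∈ S, x i ≤ a) ∧ ∀ i ∉ S, b ≤ x i

lemma isSeparatedBy_setOf_le [LinearOrder R] {g : ℕ → R} {x : ι → R} (hg : Monotone g)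
    (hx : Set.range x ⊆ Set.range g) (d : ℕ) :
    IsSeparatedBy {i | x i ≤ g d} (g d) (g (d + 1)) x := by
  refine ⟨fun i hi => hi, fun i hi => ?_⟩
  obtain ⟨k, hk⟩ := hx (Set.mem_range_self i)
  have hlt : g d < g k := hk ▸ not_le.1 hi
  exact hk ▸ hg (hg.reflect_lt hlt)

lemma sum_sq_gap_mul_indicator_le [CommRing R] [LinearOrder R] [IsStrictOrderedRing R]
    {g : ℕ → R} (hg : Monotone g) {x : ι → R} (D : Finset ℕ) (S : ℕ → Set ι)
    (hsep : ∀ d ∈ D, IsSeparatedBy (S d) (g d) (g (d + 1)) x) (i j : ι) :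
    ∑ d ∈ D, (g (d + 1) - g d) ^ 2 * ((S d).indicator 1 i - (S d).indicator 1 j) ^ 2 ≤
      (x i - x j) ^ 2 := by
  classical
  wlog hij : x i ≤ x j generalizing i j
  · simpa only [sub_sq_comm] using this j i (le_of_not_ge hij)
  have between (d : ℕ) (hd : d ∈ D.filter fun d => ¬(i ∈ S d ↔ j ∈ S d)) :
      x i ≤ g d ∧ g (d + 1) ≤ x j := by
    obtain ⟨hdD, hne⟩ := mem_filter.1 hd
    have hi := (hsep d hdD).1
    have hj := (hsep d hdD).2
    by_cases h : i ∈ S d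
    · exact ⟨hi i h, hj j (by tauto)⟩
    · exact ⟨hij.trans (hi j (by tauto)), (hj i h).trans hij⟩
  calc ∑ d ∈ D, (g (d + 1) - g d) ^ 2 * ((S d).indicator 1 i - (S d).indicator 1 j) ^ 2
      = ∑ d ∈ D.filter fun d => ¬(i ∈ S d ↔ j ∈ S d), (g (d + 1) - g d) ^ 2 := by
        rw [sum_filter]
        refine sum_congr rfl fun d _ => ?_
        by_cases hi : i ∈ S d <;> by_cases hj : j ∈ S d <;> simp [hi, hj]
    _ ≤ (x j - x i) ^ 2 :=
        sum_sq_gap_le hg _ hij (fun d hd => (between d hd).1) fun d hd => (between d hd).2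
    _ = (x i - x j) ^ 2 := sub_sq_comm _ _

end Cuts

section Ring

open Matrix

variable {ι R : Type*} [Fintype ι] [CommRing R]

/-- The decrease of the squared Euclidean norm of `x` under multiplication by `A`. -/
def dissipation (A : Matrix ι ι R) (x : ι → R) : R :=
  ∑ i, x i ^ 2 - ∑ i, (A *ᵥ x) i ^ 2

lemma dissipation_mul (A A' : Matrix ι ι R) (x : ι → R) :
    dissipation (A * A') x = dissipation A' x + dissipation A (A' *ᵥ x) := by
  simp only [dissipation, mulVec_mulVec]
  ring

/-- The product `W (t - 1) * ⋯ * W 1 * W 0`. -/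
def backwardProduct [DecidableEq ι] (W : ℕ → Matrix ι ι R) : ℕ → Matrix ι ι R
  | 0 => 1
  | t + 1 => W t * backwardProduct W t

lemma backwardProduct_add [DecidableEq ι] (W : ℕ → Matrix ι ι R) (s t : ℕ) :
    backwardProduct W (s + t) =
      backwardProduct (fun u => W (s + u)) t * backwardProduct W s := by
  induction t with
  | zero => simp [backwardProduct]
  | succ t ih => rw [← add_assoc, backwardProduct, ih, backwardProduct, Matrix.mul_assoc]

lemma backwardProduct_mem [DecidableEq ι] {M : Submonoid (Matrix ι ι R)} {W : ℕ → Matrix ι ι R}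
    (hW : ∀ t, W t ∈ M) (t : ℕ) :
    backwardProduct W t ∈ M := by
  induction t with
  | zero => exact one_mem M
  | succ t ih => exact mul_mem (hW t) ih

lemma dissipation_backwardProduct [DecidableEq ι] (W : ℕ → Matrix ι ι R) (x : ι → R) (t : ℕ) :
    dissipation (backwardProduct W t) x =
      ∑ u ∈ range t, dissipation (W u) (backwardProduct W u *ᵥ x) := by
  induction t with
  | zero => simp [backwardProduct, dissipation]
  | succ t ih => rw [backwardProduct, dissipation_mul, ih, sum_range_succ]

lemma eq_backwardProduct [DecidableEq ι] {W : ℕ → Matrix ι ι R} {Φ : ℕ → ℕ → Matrix ι ι R}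
    (hΦdiag : ∀ s, Φ s s = W s) (hΦsucc : ∀ t s, s ≤ t → Φ (t + 1) s = W (t + 1) * Φ t s)
    (s m : ℕ) : Φ (s + m) s = backwardProduct (fun u => W (s + u)) (m + 1) := by
  induction m with
  | zero => simp [backwardProduct, hΦdiag]
  | succ m ih =>
    rw [← add_assoc, hΦsucc _ _ (s.le_add_right m), ih]
    rfl

end Ring

section OrderedCommRing

open Matrix

variable {ι R : Type*} [Fintype ι] [DecidableEq ι]
  [CommRing R] [LinearOrder R] [IsStrictOrderedRing R]
  {A : Matrix ι ι R} {W : ℕ → Matrix ι ι R} {x : ι → R} {S : Set ι} {a b c η : R} {g : ℕ → R}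
  {B : ℕ}

lemma two_mul_dissipation (hA : A ∈ doublyStochastic R ι) (x : ι → R) :
    2 * dissipation A x = ∑ k, ∑ i, ∑ j, A k i * A k j * (x i - x j) ^ 2 := by
  have norm_sq : ∑ i, x i ^ 2 = ∑ k, ∑ i, A k i * x i ^ 2 := by
    rw [sum_comm]
    simp only [← sum_mul, sum_col_of_mem_doublyStochastic hA, one_mul]
  have expand (k i j : ι) : A k i * A k j * (x i - x j) ^ 2 =
      A k i * x i ^ 2 * A k j + A k i * (A k j * x j ^ 2) - 2 * (A k i * x i * (A k j * x j)) := by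
    ring
  rw [dissipation, norm_sq, ← sum_sub_distrib, mul_sum]
  refine sum_congr rfl fun k _ => ?_
  simp only [expand, sum_sub_distrib, sum_add_distrib, ← mul_sum, ← sum_mul,
    sum_row_of_mem_doublyStochastic hA, mulVec, dotProduct]
  ring

lemma sum_mul_dissipation_le {κ : Type*} (hA : A ∈ doublyStochastic R ι) (D : Finset κ)
    (w : κ → R) (y : κ → ι → R)
    (h : ∀ i j, ∑ d ∈ D, w d * (y d i - y d j) ^ 2 ≤ (x i - x j) ^ 2) :
    ∑ d ∈ D, w d * dissipation A (y d) ≤ dissipation A x := by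
  have key : ∑ d ∈ D, w d * (2 * dissipation A (y d)) ≤ 2 * dissipation A x := by
    calc ∑ d ∈ D, w d * (2 * dissipation A (y d))
        = ∑ k, ∑ i, ∑ j, A k i * A k j * ∑ d ∈ D, w d * (y d i - y d j) ^ 2 := by
          simp only [two_mul_dissipation hA, mul_sum]
          rw [sum_comm]
          refine sum_congr rfl fun k _ => ?_
          rw [sum_comm]
          refine sum_congr rfl fun i _ => ?_
          rw [sum_comm]
          simp only [mul_left_comm]
      _ ≤ ∑ k, ∑ i, ∑ j, A k i * A k j * (x i - x j) ^ 2 := by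
          gcongr with k _ i _ j _
          · exact mul_nonneg (hA.1 k i) (hA.1 k j)
          · exact h i j
      _ = 2 * dissipation A x := (two_mul_dissipation hA x).symm
  simp only [mul_left_comm _ (2 : R), ← mul_sum] at key
  linarith

lemma dissipation_nonneg (hA : A ∈ doublyStochastic R ι) (x : ι → R) : 0 ≤ dissipation A x := by
  simpa using sum_mul_dissipation_le hA (∅ : Finset ι) 0 0 fun i j => by
    simpa using sq_nonneg (x i - x j)

lemma dissipation_indicator (hA : A ∈ doublyStochastic R ι) (S : Set ι) :
    dissipation A (S.indicator 1) =
      ∑ k, (A *ᵥ S.indicator 1) k * (A *ᵥ Sᶜ.indicator 1) k := by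
  have sq_indicator (i : ι) : S.indicator (1 : ι → R) i ^ 2 = S.indicator 1 i := by
    by_cases hi : i ∈ S <;> simp [hi]
  have compl : A *ᵥ Sᶜ.indicator 1 = 1 - A *ᵥ S.indicator 1 := by
    rw [Set.indicator_compl, mulVec_sub, mulVec_one_of_mem_doublyStochastic hA]
  simp only [dissipation, sq_indicator, compl, Pi.sub_apply, Pi.one_apply, mul_sub, mul_one,
    sum_sub_distrib, sum_mulVec_of_mem_doublyStochastic hA, sq]

lemma apply_le_mulVec_indicator (hA : A ∈ doublyStochastic R ι) {j : ι} (hj : j ∈ S) (i : ι) :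
    A i j ≤ (A *ᵥ S.indicator 1) i := by
  have h := single_le_sum (f := fun k => A i k * S.indicator 1 k)
    (fun k _ => mul_nonneg (hA.1 i k) (Set.indicator_nonneg (fun _ _ => zero_le_one) k))
    (mem_univ j)
  simpa [mulVec, dotProduct, hj] using h

/-- The weight rule of the averaging model: `A` is doubly stochastic, and its diagonal entries and
its nonzero entries are at least `η`. -/
structure IsAveragingMatrix (η : R) (A : Matrix ι ι R) : Prop where
  mem_doublyStochastic : A ∈ doublyStochastic R ι
  le_of_ne_zero : ∀ i j, A i j ≠ 0 → η ≤ A i j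
  le_diag : ∀ i, η ≤ A i i

lemma IsAveragingMatrix.le_two_mul_dissipation_indicator (hA : IsAveragingMatrix η A)
    (hS : Crosses A S) : η ≤ 2 * dissipation A (S.indicator 1) := by
  obtain ⟨i, j, hij, hsep⟩ := hS
  have hds := hA.mem_doublyStochastic
  have mass_nonneg (T : Set ι) (k : ι) : 0 ≤ (A *ᵥ T.indicator 1) k :=
    nonneg_mulVec_of_mem_rowStochastic
      (mem_doublyStochastic_iff_mem_rowStochastic_and_mem_colStochastic.1 hds).1
      (Set.indicator_nonneg fun _ _ => zero_le_one) k
  have mass_add : (A *ᵥ S.indicator 1) i + (A *ᵥ Sᶜ.indicator 1) i = 1 := by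
    rw [← Pi.add_apply, ← mulVec_add, Set.indicator_self_add_compl,
      mulVec_one_of_mem_doublyStochastic hds, Pi.one_apply]
  have mass_ge {T : Set ι} (hT : i ∈ T ∨ j ∈ T) : η ≤ (A *ᵥ T.indicator 1) i :=
    hT.elim (fun h => (hA.le_diag i).trans (apply_le_mulVec_indicator hds h i))
      fun h => (hA.le_of_ne_zero i j hij).trans (apply_le_mulVec_indicator hds h i)
  rw [dissipation_indicator hds]
  refine (le_two_mul_mul_of_add_eq_one mass_add (mass_nonneg S i) (mass_nonneg Sᶜ i)
    (mass_ge (by tauto)) (mass_ge (by simp only [Set.mem_compl_iff]; tauto))).trans ?_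
  gcongr
  exact single_le_sum (f := fun k => (A *ᵥ S.indicator 1) k * (A *ᵥ Sᶜ.indicator 1) k)
    (fun k _ => mul_nonneg (mass_nonneg S k) (mass_nonneg Sᶜ k)) (mem_univ i)

lemma mulVec_le_of_forall_ne_zero (hA : A ∈ rowStochastic R ι) {i : ι}
    (h : ∀ j, A i j ≠ 0 → x j ≤ c) : (A *ᵥ x) i ≤ c := by
  calc (A *ᵥ x) i = ∑ j, A i j * x j := rfl
    _ ≤ ∑ j, A i j * c := by
        refine sum_le_sum fun j _ => ?_
        rcases eq_or_ne (A i j) 0 with h0 | h0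
        · simp [h0]
        · exact mul_le_mul_of_nonneg_left (h j h0) (hA.1 i j)
    _ = c := by rw [← sum_mul, sum_row_of_mem_rowStochastic hA, one_mul]

lemma le_mulVec_of_forall_ne_zero (hA : A ∈ rowStochastic R ι) {i : ι}
    (h : ∀ j, A i j ≠ 0 → c ≤ x j) : c ≤ (A *ᵥ x) i := by
  have := mulVec_le_of_forall_ne_zero (x := -x) (c := -c) hA (i := i)
    fun j hj => neg_le_neg (h j hj)
  simpa [mulVec_neg] using this

lemma IsSeparatedBy.mulVec (hx : IsSeparatedBy S a b x) (hA : A ∈ rowStochastic R ι)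
    (hS : ¬Crosses A S) : IsSeparatedBy S a b (A *ᵥ x) := by
  have same_side {i j : ι} (hij : A i j ≠ 0) : i ∈ S ↔ j ∈ S := by
    by_contra h
    exact hS ⟨i, j, hij, h⟩
  exact ⟨fun i hi => mulVec_le_of_forall_ne_zero hA fun j hij => hx.1 j ((same_side hij).1 hi),
    fun i hi => le_mulVec_of_forall_ne_zero hA fun j hij => hx.2 j (mt (same_side hij).2 hi)⟩

lemma IsAveragingMatrix.mul_sum_sq_gap_le (hA : IsAveragingMatrix η A) (hg : Monotone g)
    (D : Finset ℕ) (S : ℕ → Set ι) (hsep : ∀ d ∈ D, IsSeparatedBy (S d) (g d) (g (d + 1)) x)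
    (hcross : ∀ d ∈ D, Crosses A (S d)) :
    η * ∑ d ∈ D, (g (d + 1) - g d) ^ 2 ≤ 2 * dissipation A x := by
  calc η * ∑ d ∈ D, (g (d + 1) - g d) ^ 2
      ≤ ∑ d ∈ D, (g (d + 1) - g d) ^ 2 * (2 * dissipation A ((S d).indicator 1)) := by
        rw [mul_comm, sum_mul]
        gcongr with d hd
        exact hA.le_two_mul_dissipation_indicator (hcross d hd)
    _ = 2 * ∑ d ∈ D, (g (d + 1) - g d) ^ 2 * dissipation A ((S d).indicator 1) := by
        simp only [mul_sum, mul_left_comm]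
    _ ≤ 2 * dissipation A x := by
        gcongr
        exact sum_mul_dissipation_le hA.mem_doublyStochastic D _ _
          (sum_sq_gap_mul_indicator_le hg D S hsep)

lemma IsSeparatedBy.backwardProduct_mulVec (hx : IsSeparatedBy S a b x)
    (hW : ∀ t, W t ∈ rowStochastic R ι) {t : ℕ} (hS : ∀ u < t, ¬Crosses (W u) S) :
    IsSeparatedBy S a b (backwardProduct W t *ᵥ x) := by
  induction t with
  | zero => simpa [backwardProduct] using hx
  | succ t ih =>
    rw [backwardProduct, ← mulVec_mulVec]
    exact (ih fun u hu => hS u (hu.trans t.lt_succ_self)).mulVec (hW t) (hS t t.lt_succ_self)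

lemma mul_sum_sq_gap_le_two_mul_dissipation_backwardProduct
    (hW : ∀ t, IsAveragingMatrix η (W t)) (hg : Monotone g) (D : Finset ℕ) (S : ℕ → Set ι)
    (hsep : ∀ d ∈ D, IsSeparatedBy (S d) (g d) (g (d + 1)) x)
    (hcross : ∀ d ∈ D, ∃ t < B, Crosses (W t) (S d)) :
    η * ∑ d ∈ D, (g (d + 1) - g d) ^ 2 ≤ 2 * dissipation (backwardProduct W B) x := by
  classical
  have first_crossing (d : ℕ) (hd : d ∈ D) :
      ∃ t < B, Crosses (W t) (S d) ∧ ∀ u < t, ¬Crosses (W u) (S d) := by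
    obtain ⟨t, htB, ht⟩ := hcross d hd
    have hex : ∃ t, Crosses (W t) (S d) := ⟨t, ht⟩
    exact ⟨Nat.find hex, (Nat.find_min' hex ht).trans_lt htB, Nat.find_spec hex,
      fun _ hu => Nat.find_min hex hu⟩
  choose! τ hτB hτ hτmin using first_crossing
  have hrow (t : ℕ) : W t ∈ rowStochastic R ι :=
    (mem_doublyStochastic_iff_mem_rowStochastic_and_mem_colStochastic.1
      (hW t).mem_doublyStochastic).1
  rw [dissipation_backwardProduct,
    ← sum_fiberwise_of_maps_to (t := range B) (g := τ) fun d hd => mem_range.2 (hτB d hd),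
    mul_sum, mul_sum]
  refine sum_le_sum fun t _ => (hW t).mul_sum_sq_gap_le hg _ S (fun d hd => ?_) fun d hd => ?_
  all_goals obtain ⟨hdD, rfl⟩ := mem_filter.1 hd
  · exact (hsep d hdD).backwardProduct_mulVec hrow (hτmin d hdD)
  · exact hτ d hdD

lemma mul_sum_sq_le_dissipation_backwardProduct (hη : 0 ≤ η)
    (hW : ∀ t, IsAveragingMatrix η (W t)) (hconn : JointlyConnected W B) (hx : ∑ i, x i = 0) :
    η * ∑ i, x i ^ 2 ≤
      (Fintype.card ι : R) ^ 2 * (2 * dissipation (backwardProduct W B) x) := by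
  rcases isEmpty_or_nonempty ι
  · simp
  obtain ⟨g, hg, hrange, hmax⟩ := exists_monotone_range_eq x
  set n := Fintype.card ι
  have hmin (i : ι) : g 0 ≤ x i := by
    obtain ⟨k, hk⟩ : x i ∈ Set.range g := hrange ▸ Set.mem_range_self i
    exact hk ▸ hg k.zero_le
  have crossed (d : ℕ) (hd : g d < g (d + 1)) : ∃ t < B, Crosses (W t) {i | x i ≤ g d} := by
    obtain ⟨i, hi⟩ : g d ∈ Set.range x := hrange ▸ Set.mem_range_self d
    obtain ⟨j, hj⟩ : g (d + 1) ∈ Set.range x := hrange ▸ Set.mem_range_self (d + 1)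
    exact hconn _ ⟨i, hi.le⟩ ⟨j, by simpa [hj] using hd⟩
  have positive_gaps : ∑ d ∈ range n with g d < g (d + 1), (g (d + 1) - g d) ^ 2 =
      ∑ d ∈ range n, (g (d + 1) - g d) ^ 2 := by
    refine sum_filter_of_ne fun d _ hne => (hg d.le_succ).lt_of_ne fun h => hne ?_
    rw [h, sub_self, zero_pow two_ne_zero]
  calc η * ∑ i, x i ^ 2 ≤ η * (n * (g n - g 0) ^ 2) := by
        gcongr
        exact sum_sq_le_card_mul_of_sum_eq_zero hx hmin hmax
    _ ≤ η * (n * (n * ∑ d ∈ range n, (g (d + 1) - g d) ^ 2)) := by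
        gcongr
        simpa only [sum_range_sub, card_range] using
          sq_sum_le_card_mul_sum_sq (s := range n) (f := fun d => g (d + 1) - g d)
    _ = (n : R) ^ 2 * (η * ∑ d ∈ range n with g d < g (d + 1), (g (d + 1) - g d) ^ 2) := by
        rw [positive_gaps]
        ring
    _ ≤ (n : R) ^ 2 * (2 * dissipation (backwardProduct W B) x) := by
        refine mul_le_mul_of_nonneg_left ?_ (by positivity)
        exact mul_sum_sq_gap_le_two_mul_dissipation_backwardProduct hW hg _ _
          (fun d _ => isSeparatedBy_setOf_le hg hrange.ge d)
          fun d hd => crossed d (mem_filter.1 hd).2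

end OrderedCommRing

section Field

open Matrix

variable {ι R : Type*} [Fintype ι] [DecidableEq ι]
  [Field R] [LinearOrder R] [IsStrictOrderedRing R]
  {A : Matrix ι ι R} {W : ℕ → Matrix ι ι R} {x : ι → R} {η : R} {B : ℕ}

lemma IsAveragingMatrix.rate_pos [Nonempty ι] (hA : IsAveragingMatrix η A) :
    0 < 1 - η / (4 * (Fintype.card ι : R) ^ 2) := by
  have hη : η ≤ 1 := (hA.le_diag (Classical.arbitrary ι)).trans
    (le_one_of_mem_doublyStochastic hA.mem_doublyStochastic)
  have hn : (1 : R) ≤ Fintype.card ι := by exact_mod_cast Fintype.card_pos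
  rw [sub_pos, div_lt_one (by positivity)]
  nlinarith

lemma sum_sq_window_mulVec_le (hη : 0 ≤ η) (hW : ∀ t, IsAveragingMatrix η (W t))
    (hconn : JointlyConnected W B) (hx : ∑ i, x i = 0) :
    ∑ i, (backwardProduct W B *ᵥ x) i ^ 2 ≤
      (1 - η / (4 * (Fintype.card ι : R) ^ 2)) ^ 2 * ∑ i, x i ^ 2 := by
  rcases isEmpty_or_nonempty ι
  · simp
  have loss := mul_sum_sq_le_dissipation_backwardProduct hη hW hconn hx
  have relative_loss : 2 * (η / (4 * (Fintype.card ι : R) ^ 2)) * ∑ i, x i ^ 2 ≤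
      dissipation (backwardProduct W B) x := by
    calc 2 * (η / (4 * (Fintype.card ι : R) ^ 2)) * ∑ i, x i ^ 2
        = η * (∑ i, x i ^ 2) / (2 * (Fintype.card ι : R) ^ 2) := by field_simp; ring
      _ ≤ dissipation (backwardProduct W B) x := by
        rw [div_le_iff₀ (by positivity)]
        linarith
  rw [dissipation] at relative_loss
  nlinarith [mul_nonneg (sq_nonneg (η / (4 * (Fintype.card ι : R) ^ 2)))
    (sum_nonneg fun i (_ : i ∈ univ) => sq_nonneg (x i))]

lemma sum_sq_backwardProduct_mul_mulVec_le (hη : 0 ≤ η) (hW : ∀ t, IsAveragingMatrix η (W t))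
    (hconn : ∀ k, JointlyConnected (fun t => W (k + t)) B) (hx : ∑ i, x i = 0) (q : ℕ) :
    ∑ i, (backwardProduct W (q * B) *ᵥ x) i ^ 2 ≤
      ((1 - η / (4 * (Fintype.card ι : R) ^ 2)) ^ q) ^ 2 * ∑ i, x i ^ 2 := by
  induction q with
  | zero => simp [backwardProduct]
  | succ q ih =>
    set ρ : R := 1 - η / (4 * (Fintype.card ι : R) ^ 2)
    have mean_zero : ∑ i, (backwardProduct W (q * B) *ᵥ x) i = 0 := by
      rw [sum_mulVec_of_mem_doublyStochastic
        (backwardProduct_mem (fun t => (hW t).mem_doublyStochastic) _), hx]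
    rw [Nat.succ_mul, backwardProduct_add, ← mulVec_mulVec]
    calc _ ≤ ρ ^ 2 * ∑ i, (backwardProduct W (q * B) *ᵥ x) i ^ 2 :=
          sum_sq_window_mulVec_le hη (fun t => hW _) (hconn _) mean_zero
      _ ≤ ρ ^ 2 * ((ρ ^ q) ^ 2 * ∑ i, x i ^ 2) := by gcongr
      _ = (ρ ^ (q + 1)) ^ 2 * ∑ i, x i ^ 2 := by ring

lemma sum_sq_backwardProduct_mulVec_le (hη : 0 ≤ η) (hW : ∀ t, IsAveragingMatrix η (W t))
    (hconn : ∀ k, JointlyConnected (fun t => W (k + t)) B) (hx : ∑ i, x i = 0) (m : ℕ) :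
    ∑ i, (backwardProduct W m *ᵥ x) i ^ 2 ≤
      ((1 - η / (4 * (Fintype.card ι : R) ^ 2)) ^ (m / B)) ^ 2 * ∑ i, x i ^ 2 := by
  have remainder := dissipation_nonneg (backwardProduct_mem
    (fun t => (hW (m / B * B + t)).mem_doublyStochastic) (m % B))
    (backwardProduct W (m / B * B) *ᵥ x)
  rw [dissipation, mulVec_mulVec, ← backwardProduct_add, Nat.div_add_mod', sub_nonneg] at remainder
  exact remainder.trans (sum_sq_backwardProduct_mul_mulVec_le hη hW hconn hx _)

/-- The deviation `e_j - (1 / n) 𝟙` of a basis vector from its mean. -/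
def deviation (R : Type*) [Field R] (j : ι) : ι → R :=
  Pi.single j 1 - (1 / (Fintype.card ι : R)) • 1

lemma sum_deviation (j : ι) : ∑ i, deviation R j i = 0 := by
  have : Nonempty ι := ⟨j⟩
  simp [deviation]

lemma sum_sq_deviation_le_one (j : ι) : ∑ i, deviation R j i ^ 2 ≤ 1 := by
  have : Nonempty ι := ⟨j⟩
  calc ∑ i, deviation R j i ^ 2
      = ∑ i, ((Pi.single j 1 : ι → R) i - 1 / (Fintype.card ι : R)) * deviation R j i := by
        simp [deviation, sq]
    _ = deviation R j j := by
        simp [sub_mul, sum_sub_distrib, ← mul_sum, sum_deviation, Pi.single_apply]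
    _ ≤ 1 := by simp [deviation]

lemma mulVec_deviation_apply (hA : A ∈ doublyStochastic R ι) (i j : ι) :
    (A *ᵥ deviation R j) i = A i j - 1 / (Fintype.card ι : R) := by
  simp [deviation, mulVec_sub, mulVec_smul, mulVec_one_of_mem_doublyStochastic hA]

lemma abs_backwardProduct_sub_le (hη : 0 ≤ η) (hW : ∀ t, IsAveragingMatrix η (W t))
    (hconn : ∀ k, JointlyConnected (fun t => W (k + t)) B) (m : ℕ) (i j : ι) :
    |backwardProduct W m i j - 1 / (Fintype.card ι : R)| ≤
      (1 - η / (4 * (Fintype.card ι : R) ^ 2)) ^ (m / B) := by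
  have : Nonempty ι := ⟨i⟩
  set ρ : R := 1 - η / (4 * (Fintype.card ι : R) ^ 2)
  have hρ : 0 < ρ := (hW 0).rate_pos
  refine abs_le_of_sq_le_sq ?_ (by positivity)
  rw [← mulVec_deviation_apply (backwardProduct_mem (fun t => (hW t).mem_doublyStochastic) m)]
  calc (backwardProduct W m *ᵥ deviation R j) i ^ 2
      ≤ ∑ k, (backwardProduct W m *ᵥ deviation R j) k ^ 2 :=
        single_le_sum (f := fun k => (backwardProduct W m *ᵥ deviation R j) k ^ 2)
          (fun _ _ => sq_nonneg _) (mem_univ i)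
    _ ≤ (ρ ^ (m / B)) ^ 2 * ∑ k, deviation R j k ^ 2 :=
        sum_sq_backwardProduct_mulVec_le hη hW hconn (sum_deviation j) m
    _ ≤ (ρ ^ (m / B)) ^ 2 := mul_le_of_le_one_right (sq_nonneg _) (sum_sq_deviation_le_one j)

end Field

lemma pow_div_le_inv_mul_rpow_pow {ρ : ℝ} (hρ0 : 0 < ρ) (hρ1 : ρ ≤ 1) {B : ℕ} (hB : 1 ≤ B)
    (m : ℕ) : ρ ^ (m / B) ≤ ρ⁻¹ * (ρ ^ ((1 : ℝ) / B)) ^ m := by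
  have hB0 : (0 : ℝ) < B := by exact_mod_cast hB
  have floor_lt : (m : ℝ) / B < (m / B : ℕ) + 1 := by
    rw [div_lt_iff₀' hB0]
    exact_mod_cast Nat.lt_mul_div_succ m hB
  rw [← Real.rpow_natCast (ρ ^ _), ← Real.rpow_mul hρ0.le, one_div_mul_eq_div, ← div_eq_inv_mul,
    le_div_iff₀ hρ0, ← pow_succ, ← Real.rpow_natCast ρ]
  exact Real.rpow_le_rpow_of_exponent_ge hρ0 hρ1 (by exact_mod_cast floor_lt.le)

theorem transition_matrix_geometric_convergence_general {ι : Type*} [Fintype ι] [DecidableEq ι]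
    {η : ℝ} (hη : 0 ≤ η) {B : ℕ} (hB : 1 ≤ B) {W : ℕ → Matrix ι ι ℝ}
    (hW : ∀ t, IsAveragingMatrix η (W t))
    (hconn : ∀ k, JointlyConnected (fun t => W (k + t)) B) {Φ : ℕ → ℕ → Matrix ι ι ℝ}
    (hΦdiag : ∀ s, Φ s s = W s)
    (hΦsucc : ∀ t s, s ≤ t → Φ (t + 1) s = W (t + 1) * Φ t s)
    {t s : ℕ} (hst : s ≤ t) (i j : ι) :
    |Φ t s i j - 1 / (Fintype.card ι : ℝ)| ≤
      ((1 - η / (4 * (Fintype.card ι : ℝ) ^ 2)) ^ 2)⁻¹ *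
        ((1 - η / (4 * (Fintype.card ι : ℝ) ^ 2)) ^ ((1 : ℝ) / (B : ℝ))) ^ (t - s) := by
  obtain ⟨m, rfl⟩ := Nat.exists_eq_add_of_le hst
  have : Nonempty ι := ⟨i⟩
  have bound := abs_backwardProduct_sub_le hη (fun u => hW (s + u))
    (fun k => by simpa only [add_assoc] using hconn (s + k)) (m + 1) i j
  have hρ0 := (hW 0).rate_pos
  have hρ1 : 1 - η / (4 * (Fintype.card ι : ℝ) ^ 2) ≤ 1 := sub_le_self _ (by positivity)
  rw [← eq_backwardProduct hΦdiag hΦsucc] at bound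
  rw [Nat.add_sub_cancel_left]
  set ρ : ℝ := 1 - η / (4 * (Fintype.card ι : ℝ) ^ 2)
  calc |Φ (s + m) s i j - 1 / (Fintype.card ι : ℝ)| ≤ ρ ^ ((m + 1) / B) := bound
    _ ≤ ρ⁻¹ * (ρ ^ ((1 : ℝ) / B)) ^ (m + 1) := pow_div_le_inv_mul_rpow_pow hρ0 hρ1 hB _
    _ ≤ (ρ ^ 2)⁻¹ * (ρ ^ ((1 : ℝ) / B)) ^ m := by
      gcongr ?_ * ?_
      · exact inv_anti₀ (by positivity) (pow_le_of_le_one hρ0.le hρ1 two_ne_zero)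
      · exact pow_le_pow_of_le_one (by positivity) (Real.rpow_le_one hρ0.le hρ1 (by positivity))
          m.le_succ

/-- Geometric convergence of products of doubly stochastic matrices over uniformly
jointly strongly connected graph sequences (Nedić–Ozdaglar). -/
theorem transition_matrix_geometric_convergence
    {n : ℕ} (hn : 1 ≤ n) (η : ℝ) (hη0 : 0 < η) (hη1 : η < 1) (B : ℕ) (hB : 1 ≤ B)
    (W : ℕ → Matrix (Fin n) (Fin n) ℝ)
    (hWnn : ∀ t i j, 0 ≤ W t i j)
    (hWrow : ∀ t i, ∑ j, W t i j = 1)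
    (hWcol : ∀ t j, ∑ i, W t i j = 1)
    (hWη : ∀ t i j, W t i j = 0 ∨ η ≤ W t i j)
    (hWdiag : ∀ t i, η ≤ W t i i)
    (hconn : ∀ k : ℕ, ∀ a b : Fin n, a ≠ b →
      Relation.TransGen (fun p q : Fin n => ∃ t, k ≤ t ∧ t ≤ k + B - 1 ∧ 0 < W t q p) a b)
    (Φ : ℕ → ℕ → Matrix (Fin n) (Fin n) ℝ)
    (hΦdiag : ∀ s, Φ s s = W s)
    (hΦsucc : ∀ t s, s ≤ t → Φ (t + 1) s = W (t + 1) * Φ t s) :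
    ∀ t s, s ≤ t → ∀ i j,
      |Φ t s i j - 1 / (n : ℝ)| ≤
        ((1 - η / (4 * (n : ℝ) ^ 2)) ^ 2)⁻¹ *
          ((1 - η / (4 * (n : ℝ) ^ 2)) ^ ((1 : ℝ) / (B : ℝ))) ^ (t - s) := by
  intro t s hst i j
  simpa only [Fintype.card_fin] using transition_matrix_geometric_convergence_general hη0.le hB
    (fun t => ⟨mem_doublyStochastic_iff_sum.2 ⟨hWnn t, hWrow t, hWcol t⟩,
      fun i j => (hWη t i j).resolve_left, hWdiag t⟩)
    (fun k => jointlyConnected_of_transGen hB (hconn k)) hΦdiag hΦsucc hst i j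
end

section
/- (Robbins–Siegmund) Let (Ω, F, P) be a probability space with a filtration (F_t)_{t≥0}, and let (X_t), (Y_t), (Z_t) be sequences of nonnegative, integrable random variables adapted to (F_t) such that Σ_{t=0}^∞ Z_t < ∞ almost surely and E[Y_{t+1} | F_t] ≤ Y_t − X_t + Z_t almost surely for every t ≥ 0. Then, almost surely, Σ_{t=0}^∞ X_t < ∞ and Y_t converges to a finite nonnegative random variable. -/
open MeasureTheory Filter

/-!
Passing to `Y + 1` absorbs the additive noise into the multiplicative one: if
`E[Y (t + 1) | ℱ t] ≤ (1 + B t) * Y t - X t + Z t`, then `Y + 1` satisfies the same inequality with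
`B` replaced by `A = B + Z` and no additive term. Since `1 + A t ≤ exp (A t)`, discounting by the
predictable weights `w n = exp (-∑ t < n, A t)` makes `w n * Y n + ∑ t < n, w (t + 1) * X t` a
nonnegative supermartingale, so it converges almost surely. Where `∑ A` converges, `w` has a
positive limit, and the weights can be removed path by path.
-/

namespace RobbinsSiegmund

open scoped Topology

/-- The weight `exp (-∑ t < n, a t)` which compensates growth by the factors `1 + a t`, `t < n`.
The exponential is preferred to `∏ t < n, (1 + a t)⁻¹` because it is positive for every `a`. -/
noncomputable def discount (a : ℕ → ℝ) (n : ℕ) : ℝ := Real.exp (-∑ t ∈ Finset.range n, a t)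

/-- The accumulated decrease `x 0 + ⋯ + x (n - 1)`, where `x t` is discounted at time `t + 1`, the
time at which it is subtracted. -/
noncomputable def discountedSum (a x : ℕ → ℝ) (n : ℕ) : ℝ :=
  ∑ t ∈ Finset.range n, discount a (t + 1) * x t

/-- The Lyapunov function of the convergence theorem: the discounted value of `y` plus the
discounted decrease `x` accumulated so far. -/
noncomputable def lyapunov (a x y : ℕ → ℝ) (n : ℕ) : ℝ :=
  discount a n * y n + discountedSum a x n

section Pathwise

variable {a x y : ℕ → ℝ}

lemma discount_pos (a : ℕ → ℝ) (n : ℕ) : 0 < discount a n := Real.exp_pos _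

lemma discount_le_one (ha : ∀ t, 0 ≤ a t) (n : ℕ) : discount a n ≤ 1 :=
  Real.exp_le_one_iff.2 <| neg_nonpos.2 <| Finset.sum_nonneg fun t _ => ha t

lemma discount_succ_mul_le (a : ℕ → ℝ) (n : ℕ) :
    discount a (n + 1) * (1 + a n) ≤ discount a n := by
  calc discount a (n + 1) * (1 + a n)
      ≤ discount a (n + 1) * Real.exp (a n) := by
        gcongr
        · exact (discount_pos a _).le
        · linarith [Real.add_one_le_exp (a n)]
    _ = discount a n := by
        rw [discount, discount, ← Real.exp_add, Finset.sum_range_succ]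
        ring_nf

lemma tendsto_discount (ha : Summable a) :
    Tendsto (discount a) atTop (𝓝 (Real.exp (-∑' t, a t))) :=
  (Real.continuous_exp.tendsto _).comp ha.hasSum.tendsto_sum_nat.neg

lemma discountedSum_nonneg (hx : ∀ t, 0 ≤ x t) (n : ℕ) : 0 ≤ discountedSum a x n :=
  Finset.sum_nonneg fun t _ => mul_nonneg (discount_pos a _).le (hx t)

lemma lyapunov_nonneg (hx : ∀ t, 0 ≤ x t) (hy : ∀ t, 0 ≤ y t) (n : ℕ) : 0 ≤ lyapunov a x y n :=
  add_nonneg (mul_nonneg (discount_pos a n).le (hy n)) (discountedSum_nonneg hx n)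

lemma discount_succ_mul_add_le {n : ℕ} {e : ℝ} (hy : 0 ≤ y n) (he : e ≤ (1 + a n) * y n - x n) :
    discount a (n + 1) * (e + x n) ≤ discount a n * y n := by
  calc discount a (n + 1) * (e + x n)
      ≤ discount a (n + 1) * ((1 + a n) * y n) := by
        gcongr
        · exact (discount_pos a _).le
        · linarith
    _ = discount a (n + 1) * (1 + a n) * y n := by ring
    _ ≤ discount a n * y n := by gcongr; exact discount_succ_mul_le a n

lemma discount_mul_add_discountedSum_le_lyapunov {n : ℕ} {e : ℝ} (hy : 0 ≤ y n)
    (he : e ≤ (1 + a n) * y n - x n) :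
    discount a (n + 1) * e + discountedSum a x (n + 1) ≤ lyapunov a x y n := by
  have hstep := discount_succ_mul_add_le hy he
  rw [lyapunov, discountedSum, Finset.sum_range_succ, ← discountedSum]
  linarith

lemma summable_discount_mul_of_lyapunov_le (hx : ∀ t, 0 ≤ x t) (hy : ∀ t, 0 ≤ y t) {C : ℝ}
    (hC : ∀ n, lyapunov a x y n ≤ C) : Summable fun t => discount a (t + 1) * x t :=
  summable_of_sum_range_le (fun t => mul_nonneg (discount_pos a _).le (hx t)) fun n =>
    (le_add_of_nonneg_left (mul_nonneg (discount_pos a n).le (hy n))).trans (hC n)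

lemma summable_of_summable_discount_mul (ha : Summable a)
    (hx : Summable fun t => discount a (t + 1) * x t) : Summable x := by
  have hinv : Tendsto (fun t => (discount a (t + 1))⁻¹) cofinite
      (𝓝 (Real.exp (-∑' t, a t))⁻¹) := by
    rw [Nat.cofinite_eq_atTop]
    exact ((tendsto_add_atTop_iff_nat 1).2 (tendsto_discount ha)).inv₀ (Real.exp_ne_zero _)
  refine (hx.norm.mul_tendsto_const hinv).congr fun t => ?_
  have := (discount_pos a (t + 1)).ne'
  field_simp

lemma exists_tendsto_of_tendsto_lyapunov (ha : Summable a)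
    (hx : Summable fun t => discount a (t + 1) * x t) {l : ℝ}
    (hl : Tendsto (lyapunov a x y) atTop (𝓝 l)) : ∃ c, Tendsto y atTop (𝓝 c) := by
  have hquot := (hl.sub hx.hasSum.tendsto_sum_nat).div (tendsto_discount ha) (Real.exp_ne_zero _)
  refine ⟨_, hquot.congr fun n => ?_⟩
  have := (discount_pos a n).ne'
  simp only [Pi.div_apply, lyapunov, discountedSum, add_sub_cancel_right]
  field_simp

lemma summable_and_exists_tendsto_of_tendsto_lyapunov (ha : Summable a) (hx : ∀ t, 0 ≤ x t)
    (hy : ∀ t, 0 ≤ y t) {l : ℝ} (hl : Tendsto (lyapunov a x y) atTop (𝓝 l)) :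
    Summable x ∧ ∃ c, Tendsto y atTop (𝓝 c) := by
  obtain ⟨C, hC⟩ := hl.bddAbove_range
  have hsum := summable_discount_mul_of_lyapunov_le hx hy fun n => hC ⟨n, rfl⟩
  exact ⟨summable_of_summable_discount_mul ha hsum, exists_tendsto_of_tendsto_lyapunov ha hsum hl⟩

end Pathwise

section Processes

variable {Ω : Type*} {mΩ : MeasurableSpace Ω} {P : Measure Ω} {ℱ : Filtration ℕ mΩ}
  {A B X Y Z : ℕ → Ω → ℝ}

lemma ae_exists_tendsto_of_supermartingale_nonneg [IsFiniteMeasure P] {f : ℕ → Ω → ℝ}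
    (hf : Supermartingale f ℱ P) (hnonneg : ∀ n, 0 ≤ᵐ[P] f n) :
    ∀ᵐ ω ∂P, ∃ c, Tendsto (f · ω) atTop (𝓝 c) := by
  have hbdd (n : ℕ) : eLpNorm ((-f) n) 1 P ≤ ((∫ ω, f 0 ω ∂P).toNNReal : ENNReal) := by
    have hmean : ∫ ω, f n ω ∂P ≤ ∫ ω, f 0 ω ∂P := by
      simpa only [setIntegral_univ] using hf.setIntegral_le (Nat.zero_le n) MeasurableSet.univ
    have hnorm : ∫ ω, ‖f n ω‖ ∂P = ∫ ω, f n ω ∂P :=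
      integral_congr_ae ((hnonneg n).mono fun ω h => Real.norm_of_nonneg h)
    rw [Pi.neg_apply, eLpNorm_neg, eLpNorm_one_eq_lintegral_enorm,
      ← ofReal_integral_norm_eq_lintegral_enorm (hf.integrable n), hnorm]
    exact ENNReal.ofReal_le_ofReal hmean
  filter_upwards [hf.neg.exists_ae_tendsto_of_bdd hbdd] with ω ⟨c, hc⟩
  exact ⟨-c, by simpa only [Pi.neg_apply, neg_neg] using hc.neg⟩

lemma measurable_discount {m : MeasurableSpace Ω} {n : ℕ} (hA : ∀ t < n, Measurable[m] (A t)) :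
    Measurable[m] fun ω => discount (A · ω) n :=
  (Finset.measurable_fun_sum _ fun t ht => hA t (Finset.mem_range.1 ht)).neg.exp

lemma measurable_discountedSum {m : MeasurableSpace Ω} {n : ℕ}
    (hA : ∀ t < n, Measurable[m] (A t)) (hX : ∀ t < n, Measurable[m] (X t)) :
    Measurable[m] fun ω => discountedSum (A · ω) (X · ω) n := by
  refine Finset.measurable_fun_sum _ fun t ht => ?_
  have htn : t < n := Finset.mem_range.1 ht
  exact (measurable_discount fun s hs => hA s (by lia)).mul (hX t htn)

lemma measurable_lyapunov (hA : Adapted ℱ A) (hX : Adapted ℱ X) (hY : Adapted ℱ Y) (n : ℕ) :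
    Measurable[ℱ n] fun ω => lyapunov (A · ω) (X · ω) (Y · ω) n :=
  ((measurable_discount fun _ ht => hA.measurable_le ht.le).mul (hY n)).add
    (measurable_discountedSum (fun _ ht => hA.measurable_le ht.le)
      fun _ ht => hX.measurable_le ht.le)

lemma integrable_discount_mul (hA : ∀ t, Measurable (A t)) (hA0 : ∀ t, 0 ≤ᵐ[P] A t) (n : ℕ)
    {f : Ω → ℝ} (hf : Integrable f P) : Integrable (fun ω => discount (A · ω) n * f ω) P := by
  refine hf.bdd_mul (c := 1) (measurable_discount fun t _ => hA t).aestronglyMeasurable ?_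
  filter_upwards [ae_all_iff.2 hA0] with ω hω
  rw [Real.norm_of_nonneg (discount_pos _ n).le]
  exact discount_le_one hω n

lemma integrable_discount_succ_mul_of_condExp_le (hA : ∀ t, Measurable (A t))
    (hA0 : ∀ t, 0 ≤ᵐ[P] A t) {t : ℕ} (hX : Measurable (X t)) (hX0 : 0 ≤ᵐ[P] X t)
    (hY0 : ∀ t, 0 ≤ᵐ[P] Y t) (hYint : Integrable (Y t) P)
    (hcond : P[Y (t + 1) | ℱ t] ≤ᵐ[P] fun ω => (1 + A t ω) * Y t ω - X t ω) :
    Integrable (fun ω => discount (A · ω) (t + 1) * X t ω) P := by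
  -- `discount t * Y t` dominates, because `E[Y (t + 1) | ℱ t]` is nonnegative.
  refine (integrable_discount_mul hA hA0 t hYint).mono'
    ((measurable_discount fun s _ => hA s).mul hX).aestronglyMeasurable ?_
  filter_upwards [hX0, hY0 t, condExp_nonneg (hY0 (t + 1)), hcond] with ω hx hy he hle
  rw [Real.norm_of_nonneg (mul_nonneg (discount_pos _ _).le hx)]
  simpa only [Pi.zero_apply, zero_add] using
    discount_succ_mul_add_le (a := (A · ω)) (x := (X · ω)) (y := (Y · ω)) hy (he.trans hle)

lemma condExp_discount_mul_add_discountedSum [SigmaFiniteFiltration P ℱ]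
    (hA : Adapted ℱ A) (hA0 : ∀ t, 0 ≤ᵐ[P] A t) (hX : Adapted ℱ X) {n : ℕ} {f : Ω → ℝ}
    (hf : Integrable f P)
    (hsum : Integrable (fun ω => discountedSum (A · ω) (X · ω) (n + 1)) P) :
    P[fun ω => discount (A · ω) (n + 1) * f ω + discountedSum (A · ω) (X · ω) (n + 1) | ℱ n]
      =ᵐ[P] fun ω => discount (A · ω) (n + 1) * P[f | ℱ n] ω
        + discountedSum (A · ω) (X · ω) (n + 1) := by
  have hAn : ∀ t < n + 1, Measurable[ℱ n] (A t) := fun t ht => hA.measurable_le (by lia)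
  have hXn : ∀ t < n + 1, Measurable[ℱ n] (X t) := fun t ht => hX.measurable_le (by lia)
  have hprod := integrable_discount_mul (fun t => hA.measurable) hA0 (n + 1) hf
  have hpull := condExp_mul_of_stronglyMeasurable_left
    (measurable_discount hAn).stronglyMeasurable hprod hf
  have hadd := condExp_add hprod hsum (ℱ n)
  rw [condExp_of_stronglyMeasurable (ℱ.le n)
    (measurable_discountedSum hAn hXn).stronglyMeasurable hsum] at hadd
  exact hadd.trans (hpull.add .rfl)

lemma supermartingale_lyapunov [IsFiniteMeasure P]
    (hA0 : ∀ t, 0 ≤ᵐ[P] A t) (hX0 : ∀ t, 0 ≤ᵐ[P] X t) (hY0 : ∀ t, 0 ≤ᵐ[P] Y t)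
    (hYint : ∀ t, Integrable (Y t) P) (hA : Adapted ℱ A) (hX : Adapted ℱ X) (hY : Adapted ℱ Y)
    (hcond : ∀ t, P[Y (t + 1) | ℱ t] ≤ᵐ[P] fun ω => (1 + A t ω) * Y t ω - X t ω) :
    Supermartingale (fun n ω => lyapunov (A · ω) (X · ω) (Y · ω) n) ℱ P := by
  have hAm (t : ℕ) : Measurable (A t) := hA.measurable
  have hsum (n : ℕ) : Integrable (fun ω => discountedSum (A · ω) (X · ω) n) P :=
    integrable_finsetSum _ fun t _ => integrable_discount_succ_mul_of_condExp_le hAm hA0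
      hX.measurable (hX0 t) hY0 (hYint t) (hcond t)
  refine supermartingale_nat (fun n => (measurable_lyapunov hA hX hY n).stronglyMeasurable)
    (fun n => (integrable_discount_mul hAm hA0 n (hYint n)).add (hsum n)) fun n => ?_
  filter_upwards [condExp_discount_mul_add_discountedSum hA hA0 hX (hYint (n + 1)) (hsum (n + 1)),
    hY0 n, hcond n] with ω heq hy hle
  exact heq.trans_le (discount_mul_add_discountedSum_le_lyapunov (y := (Y · ω)) hy hle)

theorem ae_summable_and_exists_tendsto_of_condExp_le_mul [IsFiniteMeasure P]
    (hA0 : ∀ t, 0 ≤ᵐ[P] A t) (hX0 : ∀ t, 0 ≤ᵐ[P] X t) (hY0 : ∀ t, 0 ≤ᵐ[P] Y t)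
    (hYint : ∀ t, Integrable (Y t) P) (hA : Adapted ℱ A) (hX : Adapted ℱ X) (hY : Adapted ℱ Y)
    (hAsum : ∀ᵐ ω ∂P, Summable (A · ω))
    (hcond : ∀ t, P[Y (t + 1) | ℱ t] ≤ᵐ[P] fun ω => (1 + A t ω) * Y t ω - X t ω) :
    ∀ᵐ ω ∂P, Summable (X · ω) ∧ ∃ c, Tendsto (Y · ω) atTop (𝓝 c) := by
  have hnonneg : ∀ᵐ ω ∂P, ∀ t, 0 ≤ X t ω ∧ 0 ≤ Y t ω :=
    ae_all_iff.2 fun t => (hX0 t).and (hY0 t)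
  have hconv := ae_exists_tendsto_of_supermartingale_nonneg
    (supermartingale_lyapunov hA0 hX0 hY0 hYint hA hX hY hcond)
    fun n => hnonneg.mono fun ω h => lyapunov_nonneg (fun t => (h t).1) (fun t => (h t).2) n
  filter_upwards [hnonneg, hAsum, hconv] with ω h hsum ⟨l, hl⟩
  exact summable_and_exists_tendsto_of_tendsto_lyapunov hsum (fun t => (h t).1)
    (fun t => (h t).2) hl

lemma condExp_add_one_le_mul [IsFiniteMeasure P] {t : ℕ} (hB0 : 0 ≤ᵐ[P] B t)
    (hY0 : 0 ≤ᵐ[P] Y t) (hZ0 : 0 ≤ᵐ[P] Z t) (hYint : Integrable (Y (t + 1)) P)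
    (hcond : P[Y (t + 1) | ℱ t] ≤ᵐ[P] fun ω => (1 + B t ω) * Y t ω - X t ω + Z t ω) :
    P[fun ω => Y (t + 1) ω + 1 | ℱ t]
      ≤ᵐ[P] fun ω => (1 + (B t ω + Z t ω)) * (Y t ω + 1) - X t ω := by
  have hadd := condExp_add hYint (integrable_const (1 : ℝ)) (ℱ t)
  rw [condExp_const (ℱ.le t)] at hadd
  filter_upwards [hadd, hcond, hB0, hY0, hZ0] with ω heq hle hb hy hz
  refine heq.trans_le ?_
  simp only [Pi.add_apply, Pi.zero_apply] at hb hy hz ⊢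
  linarith [mul_nonneg hz hy]

end Processes

end RobbinsSiegmund

theorem robbins_siegmund_general {Ω : Type*} {mΩ : MeasurableSpace Ω}
    (P : Measure Ω) [IsFiniteMeasure P] (ℱ : Filtration ℕ mΩ) (B X Y Z : ℕ → Ω → ℝ)
    (hBnn : ∀ t, 0 ≤ᵐ[P] B t) (hXnn : ∀ t, 0 ≤ᵐ[P] X t) (hYnn : ∀ t, 0 ≤ᵐ[P] Y t)
    (hZnn : ∀ t, 0 ≤ᵐ[P] Z t) (hYint : ∀ t, Integrable (Y t) P)
    (hBad : Adapted ℱ B) (hXad : Adapted ℱ X) (hYad : Adapted ℱ Y) (hZad : Adapted ℱ Z)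
    (hBsum : ∀ᵐ ω ∂P, Summable (fun t => B t ω)) (hZsum : ∀ᵐ ω ∂P, Summable (fun t => Z t ω))
    (hcond : ∀ t, P[Y (t + 1) | ℱ t] ≤ᵐ[P] fun ω => (1 + B t ω) * Y t ω - X t ω + Z t ω) :
    ∀ᵐ ω ∂P, Summable (fun t => X t ω) ∧
      ∃ c : ℝ, 0 ≤ c ∧ Tendsto (fun t => Y t ω) atTop (nhds c) := by
  have hmain := RobbinsSiegmund.ae_summable_and_exists_tendsto_of_condExp_le_mul
    (A := fun t ω => B t ω + Z t ω) (Y := fun t ω => Y t ω + 1)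
    (fun t => by filter_upwards [hBnn t, hZnn t] with ω hb hz using add_nonneg hb hz) hXnn
    (fun t => by filter_upwards [hYnn t] with ω hy using add_nonneg hy zero_le_one)
    (fun t => (hYint t).add (integrable_const 1)) (fun t => (hBad t).add (hZad t)) hXad
    (fun t => (hYad t).add_const 1)
    (by filter_upwards [hBsum, hZsum] with ω hb hz using hb.add hz)
    fun t => RobbinsSiegmund.condExp_add_one_le_mul (hBnn t) (hYnn t) (hZnn t) (hYint (t + 1))
      (hcond t)
  filter_upwards [hmain, ae_all_iff.2 hYnn] with ω ⟨hX, c, hc⟩ hy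
  have hY : Tendsto (fun t => Y t ω) atTop (nhds (c - 1)) := by
    simpa only [add_sub_cancel_right] using hc.sub_const 1
  exact ⟨hX, c - 1, ge_of_tendsto' hY hy, hY⟩

/-- Robbins–Siegmund almost-supermartingale convergence theorem. -/
theorem robbins_siegmund {Ω : Type*} {mΩ : MeasurableSpace Ω}
    (P : Measure Ω) [IsProbabilityMeasure P] (ℱ : Filtration ℕ mΩ)
    (X Y Z : ℕ → Ω → ℝ)
    (hXnn : ∀ t ω, 0 ≤ X t ω) (hYnn : ∀ t ω, 0 ≤ Y t ω) (hZnn : ∀ t ω, 0 ≤ Z t ω)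
    (hXint : ∀ t, Integrable (X t) P) (hYint : ∀ t, Integrable (Y t) P)
    (hZint : ∀ t, Integrable (Z t) P)
    (hXad : Adapted ℱ X) (hYad : Adapted ℱ Y) (hZad : Adapted ℱ Z)
    (hZsum : ∀ᵐ ω ∂P, Summable (fun t => Z t ω))
    (hcond : ∀ t, P[Y (t + 1) | ℱ t] ≤ᵐ[P] fun ω => Y t ω - X t ω + Z t ω) :
    ∀ᵐ ω ∂P, Summable (fun t => X t ω) ∧
      ∃ c : ℝ, 0 ≤ c ∧ Tendsto (fun t => Y t ω) atTop (nhds c) :=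
  robbins_siegmund_general P ℱ 0 X Y Z (fun _ => .rfl) (fun t => ae_of_all P (hXnn t))
    (fun t => ae_of_all P (hYnn t)) (fun t => ae_of_all P (hZnn t)) hYint
    (fun _ => measurable_const) hXad hYad hZad (ae_of_all P fun _ => summable_zero) hZsum
    (by simpa only [Pi.zero_apply, add_zero, one_mul] using hcond)
end

section
/- Let n ≥ 1, let (W(t))_{t≥0} be n × n doubly stochastic matrices whose transition matrices Φ(t,s) = W(t)W(t−1)⋯W(s) satisfy |[Φ(t,s)]_{ij} − 1/n| ≤ Γ θ^{t−s} for all t ≥ s ≥ 0 and all i,j, for constants Γ > 0 and θ ∈ (0,1). On a probability space, let x_1(0),…,x_n(0) ∈ ℝ^m be deterministic with Λ := max_j ‖x_j(0)‖, let {α(t)}_{t≥0} be a non-increasing nonnegative sequence and c > 0, and let (x_i(t))_{t≥0} be random vectors in ℝ^m satisfying x_i(t+1) = Σ_{j=1}^n [W(t)]_{ij} x_j(t) + d_i(t), where the random vectors d_i(t) satisfy E[‖d_i(t)‖] ≤ c α(t). Then for every t ≥ 1 and every i, E[‖x_i(t) − x̄(t)‖] ≤ n Γ θ^{t−1} Λ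 + 2 c α(t−1) + n Γ c Σ_{s=1}^{t−1} θ^{t−1−s} α(s−1), where x̄(t) := (1/n) Σ_{j=1}^n x_j(t). -/
open MeasureTheory Finset

/-!
Averaging is the action on state vectors of the matrix `J` all of whose entries are `1 / n`, and
column sums equal to `1` mean that `J * W t = J`, hence `J * Φ t s = J`. Unrolling the recursion
therefore writes `x - J x` as the action of the matrices `Φ t s - J`, whose entries are small by
hypothesis, on the initial state and on the past perturbations, plus `d - J d` for the last
perturbation. This estimate holds in every normed space; in `L¹` it is the estimate of expectations.
-/

/-- `Φ` is the family of transition operators of the recursion `x (t + 1) = W t • x t`: for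
`s ≤ t`, `Φ t s` is the product `W t * W (t - 1) * ⋯ * W s`. The values of `Φ t s` for `t < s`
are left unconstrained. -/
structure IsTransition {R : Type*} [Mul R] (W : ℕ → R) (Φ : ℕ → ℕ → R) : Prop where
  self : ∀ s, Φ s s = W s
  succ : ∀ t s, s ≤ t → Φ (t + 1) s = W (t + 1) * Φ t s

namespace IsTransition

lemma mul_eq_of_forall_mul_eq {R : Type*} [Semigroup R] {W : ℕ → R} {Φ : ℕ → ℕ → R} {J : R}
    (hΦ : IsTransition W Φ) (hJ : ∀ t, J * W t = J) {s t : ℕ} (hst : s ≤ t) : J * Φ t s = J := by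
  induction t, hst using Nat.le_induction with
  | base => rw [hΦ.self, hJ]
  | succ t hst ih => rw [hΦ.succ t s hst, ← mul_assoc, hJ, ih]

lemma eq_smul_add_sum {R M : Type*} [Monoid R] [AddCommMonoid M] [DistribMulAction R M]
    {W : ℕ → R} {Φ : ℕ → ℕ → R} {x d : ℕ → M} (hΦ : IsTransition W Φ)
    (hx : ∀ t, x (t + 1) = W t • x t + d t) (t : ℕ) :
    x (t + 1) = Φ t 0 • x 0 + ∑ s ∈ Icc 1 t, Φ t s • d (s - 1) + d t := by
  induction t with
  | zero => simp [hx, hΦ.self]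
  | succ t ih =>
    have hsum : W (t + 1) • ∑ s ∈ Icc 1 t, Φ t s • d (s - 1)
        = ∑ s ∈ Icc 1 t, Φ (t + 1) s • d (s - 1) := by
      rw [smul_sum]
      refine sum_congr rfl fun s hs => ?_
      rw [hΦ.succ t s (mem_Icc.1 hs).2, mul_smul]
    calc x (t + 1 + 1)
        = W (t + 1) • (Φ t 0 • x 0 + ∑ s ∈ Icc 1 t, Φ t s • d (s - 1) + d t) + d (t + 1) := by
          rw [hx, ih]
      _ = Φ (t + 1) 0 • x 0 + (∑ s ∈ Icc 1 t, Φ (t + 1) s • d (s - 1) + Φ (t + 1) (t + 1) • d t)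
            + d (t + 1) := by
          rw [smul_add, smul_add, hsum, smul_smul, ← hΦ.succ t 0 t.zero_le, hΦ.self,
            add_assoc (Φ (t + 1) 0 • x 0)]
      _ = Φ (t + 1) 0 • x 0 + ∑ s ∈ Icc 1 (t + 1), Φ (t + 1) s • d (s - 1) + d (t + 1) := by
          rw [sum_Icc_succ_top (Nat.le_add_left 1 t), Nat.add_sub_cancel]

lemma sub_smul_eq {R M : Type*} [Ring R] [AddCommGroup M] [Module R M]
    {W : ℕ → R} {Φ : ℕ → ℕ → R} {x d : ℕ → M} {J : R} (hΦ : IsTransition W Φ)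
    (hJ : ∀ t, J * W t = J) (hx : ∀ t, x (t + 1) = W t • x t + d t) (t : ℕ) :
    x (t + 1) - J • x (t + 1)
      = (Φ t 0 - J) • x 0 + ∑ s ∈ Icc 1 t, (Φ t s - J) • d (s - 1) + (d t - J • d t) := by
  have hsum : J • ∑ s ∈ Icc 1 t, Φ t s • d (s - 1) = ∑ s ∈ Icc 1 t, J • d (s - 1) := by
    rw [smul_sum]
    refine sum_congr rfl fun s hs => ?_
    rw [smul_smul, hΦ.mul_eq_of_forall_mul_eq hJ (mem_Icc.1 hs).2]
  rw [hΦ.eq_smul_add_sum hx t, smul_add, smul_add, hsum, smul_smul,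
    hΦ.mul_eq_of_forall_mul_eq hJ t.zero_le]
  simp only [sub_smul, sum_sub_distrib]
  abel

end IsTransition

section NormedSpace

/-- The matrix `J` all of whose entries are `1 / n`, where `n` is the number of indices. It acts on
a family of vectors by replacing each of them by the average of the family. -/
noncomputable def averagingMatrix (ι : Type*) [Fintype ι] : Matrix ι ι ℝ :=
  Matrix.of fun _ _ => (Fintype.card ι : ℝ)⁻¹

variable {ι : Type*} [Fintype ι]

lemma averagingMatrix_mul {A : Matrix ι ι ℝ} (hA : ∀ j, ∑ i, A i j = 1) :
    averagingMatrix ι * A = averagingMatrix ι := by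
  ext i j
  simp [averagingMatrix, Matrix.mul_apply, ← mul_sum, hA]

lemma norm_sum_smul_le_card_mul {𝕜 E : Type*} [NormedField 𝕜] [SeminormedAddCommGroup E]
    [NormedSpace 𝕜 E] {a : ι → 𝕜} {v : ι → E} {r b : ℝ} (ha : ∀ j, ‖a j‖ ≤ r)
    (hv : ∀ j, ‖v j‖ ≤ b) : ‖∑ j, a j • v j‖ ≤ Fintype.card ι * (r * b) := by
  calc ‖∑ j, a j • v j‖ ≤ ∑ _j : ι, r * b := norm_sum_le_of_le _ fun j _ => by
        rw [norm_smul]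
        exact mul_le_mul (ha j) (hv j) (norm_nonneg _) ((norm_nonneg _).trans (ha j))
    _ = Fintype.card ι * (r * b) := by rw [sum_const, card_univ, nsmul_eq_mul]

variable {E : Type*} [SeminormedAddCommGroup E] [NormedSpace ℝ E]

lemma norm_average_le [Nonempty ι] {v : ι → E} {b : ℝ} (hv : ∀ j, ‖v j‖ ≤ b) :
    ‖(Fintype.card ι : ℝ)⁻¹ • ∑ j, v j‖ ≤ b := by
  have hcard : (Fintype.card ι : ℝ) ≠ 0 := Nat.cast_ne_zero.2 Fintype.card_ne_zero
  calc ‖(Fintype.card ι : ℝ)⁻¹ • ∑ j, v j‖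
      ≤ Fintype.card ι * ((Fintype.card ι : ℝ)⁻¹ * b) := by
        rw [smul_sum]
        exact norm_sum_smul_le_card_mul (fun _ => by simp) hv
    _ = b := mul_inv_cancel_left₀ hcard b

open scoped Matrix.Module in
lemma IsTransition.norm_sub_average_le {W : ℕ → Matrix ι ι ℝ} {Φ : ℕ → ℕ → Matrix ι ι ℝ}
    {ρ : ℕ → ℕ → ℝ} {x d : ℕ → ι → E} {Λ : ℝ} {β : ℕ → ℝ} (hΦ : IsTransition W Φ)
    (hW : ∀ t j, ∑ i, W t i j = 1)
    (hρ : ∀ t s, s ≤ t → ∀ i j, |Φ t s i j - (Fintype.card ι : ℝ)⁻¹| ≤ ρ t s)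
    (hx : ∀ t i, x (t + 1) i = (∑ j, W t i j • x t j) + d t i)
    (hΛ : ∀ j, ‖x 0 j‖ ≤ Λ) (hβ : ∀ t j, ‖d t j‖ ≤ β t) (t : ℕ) (i : ι) :
    ‖x (t + 1) i - (Fintype.card ι : ℝ)⁻¹ • ∑ j, x (t + 1) j‖
      ≤ Fintype.card ι * ρ t 0 * Λ + 2 * β t
        + Fintype.card ι * ∑ s ∈ Icc 1 t, ρ t s * β (s - 1) := by
  classical
  have hdecomp : x (t + 1) i - (Fintype.card ι : ℝ)⁻¹ • ∑ j, x (t + 1) j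
      = ∑ j, (Φ t 0 i j - (Fintype.card ι : ℝ)⁻¹) • x 0 j
        + ∑ s ∈ Icc 1 t, ∑ j, (Φ t s i j - (Fintype.card ι : ℝ)⁻¹) • d (s - 1) j
        + (d t i - (Fintype.card ι : ℝ)⁻¹ • ∑ j, d t j) := by
    simpa [averagingMatrix, smul_sum] using
      congrFun (hΦ.sub_smul_eq (fun t => averagingMatrix_mul (hW t)) (fun t => funext (hx t)) t) i
  have hinit : ‖∑ j, (Φ t 0 i j - (Fintype.card ι : ℝ)⁻¹) • x 0 j‖
      ≤ Fintype.card ι * ρ t 0 * Λ := by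
    rw [mul_assoc]
    exact norm_sum_smul_le_card_mul (hρ t 0 t.zero_le i) hΛ
  have hpast : ‖∑ s ∈ Icc 1 t, ∑ j, (Φ t s i j - (Fintype.card ι : ℝ)⁻¹) • d (s - 1) j‖
      ≤ Fintype.card ι * ∑ s ∈ Icc 1 t, ρ t s * β (s - 1) := by
    rw [mul_sum]
    exact norm_sum_le_of_le _ fun s hs =>
      norm_sum_smul_le_card_mul (hρ t s (mem_Icc.1 hs).2 i) (hβ (s - 1))
  have hlast : ‖d t i - (Fintype.card ι : ℝ)⁻¹ • ∑ j, d t j‖ ≤ 2 * β t := by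
    have : Nonempty ι := ⟨i⟩
    linarith [norm_sub_le_of_le (hβ t i) (norm_average_le (hβ t))]
  rw [hdecomp]
  linarith [norm_add₃_le.trans (add_le_add_three hinit hpast hlast)]

end NormedSpace

section Expectation

variable {ι Ω E : Type*} {mΩ : MeasurableSpace Ω} {P : Measure Ω} [NormedAddCommGroup E]

lemma toL1_sum (s : Finset ι) {f : ι → Ω → E} (hf : ∀ i, Integrable (f i) P) :
    (integrable_finsetSum' s fun i _ => hf i).toL1 (∑ i ∈ s, f i) = ∑ i ∈ s, (hf i).toL1 (f i) := by
  classical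
  induction s using Finset.induction_on with
  | empty => rfl
  | insert i s hi ih =>
    simp only [sum_insert hi, ← ih]
    exact Integrable.toL1_add _ _ _ _

variable [NormedSpace ℝ E] [Fintype ι] {W : ℕ → Matrix ι ι ℝ} {x d : ℕ → ι → Ω → E}

lemma integrable_of_recursion (hx₀ : ∀ i, Integrable (x 0 i) P)
    (hd : ∀ t i, Integrable (d t i) P)
    (hx : ∀ t i ω, x (t + 1) i ω = (∑ j, W t i j • x t j ω) + d t i ω) (t : ℕ) (i : ι) :
    Integrable (x t i) P := by
  induction t generalizing i with
  | zero => exact hx₀ i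
  | succ t ih =>
    rw [funext (hx t i)]
    exact (integrable_finsetSum _ fun j _ => (ih j).smul _).add (hd t i)

theorem consensus_error_bound_general {Φ : ℕ → ℕ → Matrix ι ι ℝ} {ρ : ℕ → ℕ → ℝ} {Λ : ℝ}
    {β : ℕ → ℝ} (hΦ : IsTransition W Φ) (hW : ∀ t j, ∑ i, W t i j = 1)
    (hρ : ∀ t s, s ≤ t → ∀ i j, |Φ t s i j - (Fintype.card ι : ℝ)⁻¹| ≤ ρ t s)
    (hx₀ : ∀ i, Integrable (x 0 i) P) (hΛ : ∀ i, ∫ ω, ‖x 0 i ω‖ ∂P ≤ Λ)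
    (hx : ∀ t i ω, x (t + 1) i ω = (∑ j, W t i j • x t j ω) + d t i ω)
    (hd : ∀ t i, Integrable (d t i) P) (hβ : ∀ t i, ∫ ω, ‖d t i ω‖ ∂P ≤ β t) (t : ℕ) (i : ι) :
    ∫ ω, ‖x (t + 1) i ω - (Fintype.card ι : ℝ)⁻¹ • ∑ j, x (t + 1) j ω‖ ∂P
      ≤ Fintype.card ι * ρ t 0 * Λ + 2 * β t
        + Fintype.card ι * ∑ s ∈ Icc 1 t, ρ t s * β (s - 1) := by
  have hx_int := integrable_of_recursion hx₀ hd hx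
  have hrecL1 (t i) : (hx_int (t + 1) i).toL1 (x (t + 1) i)
      = ∑ j, W t i j • (hx_int t j).toL1 (x t j) + (hd t i).toL1 (d t i) := by
    simp only [← Integrable.toL1_smul', ← toL1_sum, ← Integrable.toL1_add]
    congr 1
    ext ω
    simp [hx]
  have hnorm : ‖(hx_int (t + 1) i).toL1 (x (t + 1) i)
        - (Fintype.card ι : ℝ)⁻¹ • ∑ j, (hx_int (t + 1) j).toL1 (x (t + 1) j)‖
      = ∫ ω, ‖x (t + 1) i ω - (Fintype.card ι : ℝ)⁻¹ • ∑ j, x (t + 1) j ω‖ ∂P := by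
    simp only [← toL1_sum, ← Integrable.toL1_smul', ← Integrable.toL1_sub,
      L1.norm_of_fun_eq_integral_norm, Pi.sub_apply, Pi.smul_apply, Finset.sum_apply]
  rw [← hnorm]
  exact hΦ.norm_sub_average_le (x := fun t j => (hx_int t j).toL1 (x t j)) hW hρ hrecL1
    (fun j => (L1.norm_of_fun_eq_integral_norm _).trans_le (hΛ j))
    (fun t j => (L1.norm_of_fun_eq_integral_norm _).trans_le (hβ t j)) t i

end Expectation

/-- Consensus (disagreement) bound for distributed averaging with perturbations whose
expected norms are controlled by the step sizes. -/
theorem consensus_error_bound {n m : ℕ} (hn : 1 ≤ n)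
    (W : ℕ → Matrix (Fin n) (Fin n) ℝ)
    (hWnn : ∀ t i j, 0 ≤ W t i j)
    (hWrow : ∀ t i, ∑ j, W t i j = 1)
    (hWcol : ∀ t j, ∑ i, W t i j = 1)
    (Φ : ℕ → ℕ → Matrix (Fin n) (Fin n) ℝ)
    (hΦdiag : ∀ s, Φ s s = W s)
    (hΦsucc : ∀ t s, s ≤ t → Φ (t + 1) s = W (t + 1) * Φ t s)
    (Γ θ : ℝ) (hΓ : 0 < Γ) (hθ : θ ∈ Set.Ioo (0 : ℝ) 1)
    (hΦb : ∀ t s, s ≤ t → ∀ i j, |Φ t s i j - 1 / (n : ℝ)| ≤ Γ * θ ^ (t - s))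
    {Ω : Type*} {mΩ : MeasurableSpace Ω} (P : Measure Ω) [IsProbabilityMeasure P]
    (x0 : Fin n → EuclideanSpace ℝ (Fin m)) (Λ : ℝ)
    (hΛ : IsGreatest (Set.range fun j => ‖x0 j‖) Λ)
    (α : ℕ → ℝ) (hαnn : ∀ t, 0 ≤ α t) (hαmono : ∀ t, α (t + 1) ≤ α t)
    (c : ℝ) (hc : 0 < c)
    (x : ℕ → Fin n → Ω → EuclideanSpace ℝ (Fin m))
    (d : ℕ → Fin n → Ω → EuclideanSpace ℝ (Fin m))
    (hx0 : ∀ i, x 0 i = fun _ => x0 i)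
    (hrec : ∀ t i ω, x (t + 1) i ω = (∑ j, W t i j • x t j ω) + d t i ω)
    (hdint : ∀ t i, Integrable (d t i) P)
    (hdbd : ∀ t i, ∫ ω, ‖d t i ω‖ ∂P ≤ c * α t) :
    ∀ t, 1 ≤ t → ∀ i,
      ∫ ω, ‖x t i ω - (n : ℝ)⁻¹ • ∑ j, x t j ω‖ ∂P
        ≤ n * Γ * θ ^ (t - 1) * Λ + 2 * c * α (t - 1)
          + n * Γ * c * ∑ s ∈ Finset.Icc 1 (t - 1), θ ^ (t - 1 - s) * α (s - 1) := by
  rintro _ ht i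
  obtain ⟨t, rfl⟩ := Nat.exists_eq_add_of_le' ht
  simpa [mul_sum, mul_assoc, mul_left_comm _ c] using
    consensus_error_bound_general (ρ := fun t s => Γ * θ ^ (t - s)) ⟨hΦdiag, hΦsucc⟩ hWcol
      (by simpa using hΦb) (by simp [hx0]) (by simpa [hx0] using fun i => hΛ.2 ⟨i, rfl⟩)
      hrec hdint hdbd t i
end
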